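/- Let h : S¹ → ℝ³ be a C^∞ map, let ξ ∈ ℝ³ be a unit vector, and let π : ℝ³ → ℝ be the projection π(x) = ⟨x, ξ⟩. Suppose the function π ∘ h : S¹ → ℝ has exactly n local extremum points (n finite and positive), of which exactly s are absolute extrema, and that s > n/2 + 1. Then for every C^∞ map H : ℝ² → ℝ³ with H = h on S¹ whose derivative is injective at every point of the closed unit disk B̄² (an immersed disk spanned by h), there exists a point x ∈ B̄² at which the derivative of π ∘ H vanishes; equivalently, the tangent plane of the immersed surface at x is orthogonal to ξ, i.e., the normal direction at x is parallel to ξ. -/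

import Mathlib

open scoped RealInnerProductSpace

noncomputable section

abbrev E2 : Type := EuclideanSpace ℝ (Fin 2)

abbrev E3 : Type := EuclideanSpace ℝ (Fin 3)

/-- The point (cos t, sin t) on the unit circle in ℝ². -/
def sphPt (t : ℝ) : E2 := (EuclideanSpace.equiv (Fin 2) ℝ).symm ![Real.cos t, Real.sin t]


open Set Filter Topology

/-- weight of an extremum -/
def wgt (g α : ℝ → ℝ) (t : ℝ) : ℝ :=
  open Classical in if IsLocalMax g t then -Real.cos (α t) else Real.cos (α t)

lemma wgt_of_max {g α : ℝ → ℝ} {t : ℝ} (h : IsLocalMax g t) : wgt g α t = -Real.cos (α t) := by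
  simp [wgt, h]

lemma wgt_of_not {g α : ℝ → ℝ} {t : ℝ} (h : ¬ IsLocalMax g t) : wgt g α t = Real.cos (α t) := by
  simp [wgt, h]

lemma not_max_of_strictMono {g : ℝ → ℝ} {a b : ℝ} (hab : a < b)
    (hg : StrictMonoOn g (Icc a b)) : ¬ IsLocalMax g a := by
  intro h
  have h1 : ∀ᶠ x in 𝓝[>] a, g x ≤ g a := h.filter_mono nhdsWithin_le_nhds
  have h2 : ∀ᶠ x in 𝓝[>] a, x ∈ Ioo a b := Ioo_mem_nhdsGT hab
  obtain ⟨x, hx1, hx2⟩ := (h1.and h2).exists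
  exact absurd (hg ⟨le_rfl, hab.le⟩ ⟨hx2.1.le, hx2.2.le⟩ hx2.1) (not_lt.2 hx1)

lemma not_max_of_strictAnti {g : ℝ → ℝ} {a b : ℝ} (hab : a < b)
    (hg : StrictAntiOn g (Icc a b)) : ¬ IsLocalMax g b := by
  intro h
  have h1 : ∀ᶠ x in 𝓝[<] b, g x ≤ g b := h.filter_mono nhdsWithin_le_nhds
  have h2 : ∀ᶠ x in 𝓝[<] b, x ∈ Ioo a b := Ioo_mem_nhdsLT hab
  obtain ⟨x, hx1, hx2⟩ := (h1.and h2).exists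
  exact absurd (hg ⟨hx2.1.le, hx2.2.le⟩ ⟨hab.le, le_rfl⟩ hx2.2) (not_lt.2 hx1)

lemma not_min_of_strictMono {g : ℝ → ℝ} {a b : ℝ} (hab : a < b)
    (hg : StrictMonoOn g (Icc a b)) : ¬ IsLocalMin g b := by
  intro h
  have h1 : ∀ᶠ x in 𝓝[<] b, g b ≤ g x := h.filter_mono nhdsWithin_le_nhds
  have h2 : ∀ᶠ x in 𝓝[<] b, x ∈ Ioo a b := Ioo_mem_nhdsLT hab
  obtain ⟨x, hx1, hx2⟩ := (h1.and h2).exists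
  exact absurd (hg ⟨hx2.1.le, hx2.2.le⟩ ⟨hab.le, le_rfl⟩ hx2.2) (not_lt.2 hx1)

lemma not_min_of_strictAnti {g : ℝ → ℝ} {a b : ℝ} (hab : a < b)
    (hg : StrictAntiOn g (Icc a b)) : ¬ IsLocalMin g a := by
  intro h
  have h1 : ∀ᶠ x in 𝓝[>] a, g a ≤ g x := h.filter_mono nhdsWithin_le_nhds
  have h2 : ∀ᶠ x in 𝓝[>] a, x ∈ Ioo a b := Ioo_mem_nhdsGT hab
  obtain ⟨x, hx1, hx2⟩ := (h1.and h2).exists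
  exact absurd (hg ⟨le_rfl, hab.le⟩ ⟨hx2.1.le, hx2.2.le⟩ hx2.1) (not_lt.2 hx1)

/-- continuous function staying in the closed set where sin is nonneg -/
lemma angle_step {α : ℝ → ℝ} (hα : Continuous α) {a b : ℝ} (hab : a < b)
    (hs : ∀ t ∈ Icc a b, 0 ≤ Real.sin (α t)) (ha : Real.sin (α a) = 0)
    (hb : Real.sin (α b) = 0) :
    α b - α a = Real.pi * ((Real.cos (α a) - Real.cos (α b)) / 2) := by
  obtain ⟨k, hk⟩ := Real.sin_eq_zero_iff.1 ha
  obtain ⟨l, hl⟩ := Real.sin_eq_zero_iff.1 hb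
  have hpi := Real.pi_pos
  -- value in the image gives nonneg sine
  have key : ∀ y, (y ∈ uIcc (α a) (α b)) → 0 ≤ Real.sin y := by
    intro y hy
    obtain ⟨t, ht, rfl⟩ := intermediate_value_uIcc (hα.continuousOn (s := uIcc a b)) hy
    rw [uIcc_of_le hab.le] at ht
    exact hs t ht
  have hcos : ∀ m : ℤ, Real.cos (m * Real.pi) = (-1) ^ m := by
    intro m
    have := Real.cos_int_mul_pi m
    simpa using this
  have hneg : ∀ m : ℤ, Real.sin ((m:ℝ) * Real.pi + Real.pi / 2) = (-1) ^ m := by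
    intro m
    rw [Real.sin_add_pi_div_two, hcos]
  rw [← hk, ← hl, hcos, hcos]
  have low : ∀ m : ℤ, min k l ≤ m → m + 1 ≤ max k l → Even m := by
    intro m h1 h2
    by_contra ho
    rw [Int.not_even_iff_odd] at ho
    have h3 := key ((m:ℝ) * Real.pi + Real.pi / 2) (by
      rw [← hk, ← hl, mem_uIcc]
      rcases le_total k l with h | h
      · left
        simp only [min_eq_left h, max_eq_right h] at h1 h2
        have h1' : (k:ℝ) ≤ m := by exact_mod_cast h1
        have h2' : (m:ℝ) + 1 ≤ l := by exact_mod_cast h2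
        constructor <;> nlinarith
      · right
        simp only [min_eq_right h, max_eq_left h] at h1 h2
        have h1' : (l:ℝ) ≤ m := by exact_mod_cast h1
        have h2' : (m:ℝ) + 1 ≤ k := by exact_mod_cast h2
        constructor <;> nlinarith)
    rw [hneg, ho.neg_one_zpow] at h3
    linarith
  rcases lt_trichotomy k l with h | h | h
  · have e1 : Even k := low k (by omega) (by omega)
    have : l = k + 1 := by
      by_contra hne
      have := low (k+1) (by omega) (by omega)
      grind
    subst this
    have o1 : Odd (k + 1) := e1.add_one
    rw [e1.neg_one_zpow, o1.neg_one_zpow]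
    push_cast; ring
  · subst h; ring
  · have e1 : Even l := low l (by omega) (by omega)
    have : k = l + 1 := by
      by_contra hne
      have := low (l+1) (by omega) (by omega)
      grind
    subst this
    have o1 : Odd (l + 1) := e1.add_one
    rw [e1.neg_one_zpow, o1.neg_one_zpow]
    push_cast; ring

lemma extr_sin {g α ρ : ℝ → ℝ} (hρ : ∀ t, 0 < ρ t)
    (hg : ∀ t, HasDerivAt g (ρ t * Real.sin (α t)) t) {t : ℝ} (h : IsLocalExtr g t) :
    Real.sin (α t) = 0 := by
  have := h.hasDerivAt_eq_zero (hg t)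
  exact (mul_eq_zero.1 this).resolve_left (hρ t).ne'

lemma base_step {g α ρ : ℝ → ℝ} (hα : Continuous α) (hρ : ∀ t, 0 < ρ t)
    (hg : ∀ t, HasDerivAt g (ρ t * Real.sin (α t)) t) {a b : ℝ} (hab : a < b)
    (ha : IsLocalExtr g a) (hb : IsLocalExtr g b)
    (hno : ∀ t ∈ Ioo a b, ¬ IsLocalExtr g t) :
    α b - α a = Real.pi * ((wgt g α a + wgt g α b) / 2) := by
  have hsa := extr_sin hρ hg ha
  have hsb := extr_sin hρ hg hb
  have hgc : Continuous g := continuous_iff_continuousAt.2 fun t => (hg t).continuousAt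
  have hinj : InjOn g (Icc a b) := by
    have : ∀ x ∈ Icc a b, ∀ y ∈ Icc a b, x < y → g x ≠ g y := by
      intro x hx y hy hxy he
      obtain ⟨z, hz, hz'⟩ := exists_isLocalExtr_Ioo hxy hgc.continuousOn he
      exact hno z ⟨hx.1.trans_lt hz.1, hz.2.trans_le hy.2⟩ hz'
    intro x hx y hy he
    rcases lt_trichotomy x y with h | h | h
    · exact absurd he (this x hx y hy h)
    · exact h
    · exact absurd he.symm (this y hy x hx h)
  rcases ContinuousOn.strictMonoOn_of_injOn_Icc' hab.le hgc.continuousOn hinj with hm | hm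
  · have hs : ∀ t ∈ Icc a b, 0 ≤ Real.sin (α t) := by
      have hI : ∀ t ∈ Ioo a b, 0 ≤ Real.sin (α t) := by
        intro t ht
        have h1 : 0 ≤ derivWithin g (Icc a b) t := hm.monotoneOn.derivWithin_nonneg
        rw [derivWithin_of_mem_nhds (Icc_mem_nhds ht.1 ht.2), (hg t).deriv] at h1
        exact nonneg_of_mul_nonneg_right h1 (hρ t)
      intro t ht
      rcases eq_or_lt_of_le ht.1 with h | h
      · rw [← h, hsa]
      rcases eq_or_lt_of_le ht.2 with h' | h'
      · rw [h', hsb]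
      exact hI t ⟨h, h'⟩
    rw [angle_step hα hab hs hsa hsb, wgt_of_not (not_max_of_strictMono hab hm),
      wgt_of_max (hb.resolve_left (not_min_of_strictMono hab hm))]
    ring
  · have hs : ∀ t ∈ Icc a b, 0 ≤ Real.sin (α t + Real.pi) := by
      have hI : ∀ t ∈ Ioo a b, 0 ≤ Real.sin (α t + Real.pi) := by
        intro t ht
        have h1 : derivWithin g (Icc a b) t ≤ 0 := hm.antitoneOn.derivWithin_nonpos
        rw [derivWithin_of_mem_nhds (Icc_mem_nhds ht.1 ht.2), (hg t).deriv] at h1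
        rw [Real.sin_add_pi]
        have := hρ t
        by_contra hc
        push Not at hc
        nlinarith
      intro t ht
      rcases eq_or_lt_of_le ht.1 with h | h
      · rw [← h, Real.sin_add_pi, hsa, neg_zero]
      rcases eq_or_lt_of_le ht.2 with h' | h'
      · rw [h', Real.sin_add_pi, hsb, neg_zero]
      exact hI t ⟨h, h'⟩
    have := angle_step (α := fun t => α t + Real.pi) (by fun_prop) hab hs
      (by simp [Real.sin_add_pi, hsa]) (by simp [Real.sin_add_pi, hsb])
    simp only [Real.cos_add_pi] at this
    rw [wgt_of_not (not_max_of_strictAnti hab hm),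
      wgt_of_max (ha.resolve_left (not_min_of_strictAnti hab hm))]
    linarith

lemma multi_step {g α ρ : ℝ → ℝ} (hα : Continuous α) (hρ : ∀ t, 0 < ρ t)
    (hg : ∀ t, HasDerivAt g (ρ t * Real.sin (α t)) t) (N : ℕ) : ∀ (F : Finset ℝ) (a b : ℝ), a < b →
    IsLocalExtr g a → IsLocalExtr g b → F.card = N →
    (∀ t, t ∈ F ↔ t ∈ Ioo a b ∧ IsLocalExtr g t) →
    α b - α a = Real.pi * (∑ t ∈ F, wgt g α t + (wgt g α a + wgt g α b) / 2) := by
  induction N using Nat.strong_induction_on with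
  | _ N ih =>
    intro F a b hab ha hb hN hF
    rcases F.eq_empty_or_nonempty with h0 | ⟨c, hc⟩
    · subst h0
      rw [base_step hα hρ hg hab ha hb (fun t ht h => by simpa using (hF t).2 ⟨ht, h⟩)]
      simp
    · have hc' := (hF c).1 hc
      have hne : ∀ p : ℝ → Prop, [DecidablePred p] → ¬ p c → (F.filter p).card < N := by
        intro p _ hp
        rw [← hN]
        exact Finset.card_lt_card (Finset.filter_ssubset.2 ⟨c, hc, hp⟩)
      have h1 := ih _ (hne (· < c) (lt_irrefl c)) (F.filter (· < c)) a c hc'.1.1 ha hc'.2 rfl (by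
        intro t; rw [Finset.mem_filter, hF]; simp only [mem_Ioo]; 
        constructor
        · rintro ⟨⟨⟨h1, h2⟩, h3⟩, h4⟩; exact ⟨⟨h1, h4⟩, h3⟩
        · rintro ⟨⟨h1, h4⟩, h3⟩; exact ⟨⟨⟨h1, h4.trans hc'.1.2⟩, h3⟩, h4⟩)
      have h2 := ih _ (hne (c < ·) (lt_irrefl c)) (F.filter (c < ·)) c b hc'.1.2 hc'.2 hb rfl (by
        intro t; rw [Finset.mem_filter, hF]; simp only [mem_Ioo]; 
        constructor
        · rintro ⟨⟨⟨h1, h2⟩, h3⟩, h4⟩; exact ⟨⟨h4, h2⟩, h3⟩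
        · rintro ⟨⟨h1, h4⟩, h3⟩; exact ⟨⟨⟨hc'.1.1.trans h1, h4⟩, h3⟩, h1⟩)
      have h3 : ∑ t ∈ F, wgt g α t = ∑ t ∈ F.filter (· < c), wgt g α t + wgt g α c
          + ∑ t ∈ F.filter (c < ·), wgt g α t := by
        rw [← Finset.sum_filter_add_sum_filter_not F (· < c), add_assoc]
        congr 1
        have : F.filter (fun t => ¬ t < c) = insert c (F.filter (c < ·)) := by
          ext t
          simp only [Finset.mem_filter, Finset.mem_insert, not_lt]
          constructor
          · rintro ⟨h1, h2⟩
            rcases eq_or_lt_of_le h2 with h | h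
            · exact Or.inl h.symm
            · exact Or.inr ⟨h1, h⟩
          · rintro (rfl | ⟨h1, h2⟩)
            · exact ⟨hc, le_rfl⟩
            · exact ⟨h1, h2.le⟩
        rw [this, Finset.sum_insert (by simp)]
      rw [h3]
      linear_combination h1 + h2

lemma shift_extr {g : ℝ → ℝ} {p : ℝ} (hp : Function.Periodic g p) (t : ℝ) :
    (IsLocalMax g (t + p) ↔ IsLocalMax g t) ∧ (IsLocalMin g (t + p) ↔ IsLocalMin g t) := by
  have h : Filter.map (fun x => x + p) (𝓝 t) = 𝓝 (t + p) := map_add_right_nhds p t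
  constructor
  · unfold IsLocalMax IsMaxFilter
    rw [← h, Filter.eventually_map]
    simp [hp _]
  · unfold IsLocalMin IsMinFilter
    rw [← h, Filter.eventually_map]
    simp [hp _]

lemma total_sum {g α ρ : ℝ → ℝ} (hα : Continuous α) (hρ : ∀ t, 0 < ρ t)
    (hg : ∀ t, HasDerivAt g (ρ t * Real.sin (α t)) t)
    (hper : Function.Periodic g (2 * Real.pi))
    (hαp : ∀ t, α (t + 2 * Real.pi) = α t - 2 * Real.pi) (T : Finset ℝ) (hne : T.Nonempty)
    (hT : ∀ t, t ∈ T ↔ t ∈ Ico 0 (2 * Real.pi) ∧ IsLocalExtr g t) :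
    ∑ t ∈ T, wgt g α t = -2 := by
  have hpi := Real.pi_pos
  set a := T.min' hne with ha
  have haT : a ∈ T := T.min'_mem hne
  have hmin : ∀ t ∈ T, a ≤ t := fun t ht => T.min'_le t ht
  obtain ⟨haI, haE⟩ := (hT a).1 haT
  have hsh : ∀ t, IsLocalExtr g (t + 2 * Real.pi) ↔ IsLocalExtr g t := fun t =>
    or_congr (shift_extr hper t).2 (shift_extr hper t).1
  have h := multi_step hα hρ hg _ (T.erase a) a (a + 2 * Real.pi) (by linarith) haE
    ((hsh a).2 haE) rfl (by
      intro t
      rw [Finset.mem_erase, hT]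
      constructor
      · rintro ⟨h1, h2, h3⟩
        have := hmin t ((hT t).2 ⟨h2, h3⟩)
        exact ⟨⟨lt_of_le_of_ne this (Ne.symm h1), by linarith [h2.2, haI.1]⟩, h3⟩
      · rintro ⟨⟨h1, h2⟩, h3⟩
        refine ⟨h1.ne', ⟨haI.1.trans h1.le, ?_⟩, h3⟩
        by_contra hc
        push Not at hc
        have h4 : IsLocalExtr g (t - 2 * Real.pi) := by
          rw [← hsh]; simpa using h3
        have := hmin (t - 2 * Real.pi) ((hT _).2 ⟨⟨by linarith, by linarith [haI.2]⟩, h4⟩)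
        linarith)
  have hw : wgt g α (a + 2 * Real.pi) = wgt g α a := by
    unfold wgt
    rw [hαp, Real.cos_sub_two_pi]
    by_cases hm : IsLocalMax g a
    · rw [if_pos hm, if_pos ((shift_extr hper a).1.2 hm)]
    · rw [if_neg hm, if_neg (fun h => hm ((shift_extr hper a).1.1 h))]
  rw [hw, hαp] at h
  rw [← Finset.add_sum_erase T _ haT]
  have h5 : Real.pi * (∑ t ∈ T.erase a, wgt g α t + wgt g α a + 2) = 0 := by linarith
  have := (mul_eq_zero.1 h5).resolve_left hpi.ne'
  linarith

lemma sphPt_eq (t : ℝ) : sphPt t = Real.cos t • sphPt 0 + Real.sin t • sphPt (Real.pi / 2) := by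
  ext i
  fin_cases i <;> simp [sphPt]

lemma norm_sphPt (t : ℝ) : ‖sphPt t‖ = 1 := by
  simp [EuclideanSpace.norm_eq, sphPt]

lemma exists_sphPt {x : E2} (hx : ‖x‖ = 1) : ∃ t, x = sphPt t := by
  have h : x 0 ^ 2 + x 1 ^ 2 = 1 := by
    simpa [EuclideanSpace.norm_eq, Fin.sum_univ_two] using hx
  have hz : ‖(⟨x 0, x 1⟩ : ℂ)‖ = 1 := by
    rw [Complex.norm_def, Complex.normSq_mk, Real.sqrt_eq_one]; linarith
  refine ⟨Complex.arg ⟨x 0, x 1⟩, ?_⟩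
  have h0 : (⟨x 0, x 1⟩ : ℂ) ≠ 0 := by
    intro h; rw [h] at hz; simp at hz
  ext i
  fin_cases i
  · simp [sphPt, Complex.cos_arg h0, hz]
  · simp [sphPt, Complex.sin_arg, hz]

lemma radial_nonneg {f : E2 → ℝ} (hf : Differentiable ℝ f)
    (hcrit : ∀ x ∈ Metric.closedBall (0 : E2) 1, fderiv ℝ f x ≠ 0) {t : ℝ}
    (ht : ∀ u, f (sphPt u) ≤ f (sphPt t)) : 0 ≤ fderiv ℝ f (sphPt t) (sphPt t) := by
  have hmem : ∀ t, sphPt t ∈ Metric.closedBall (0 : E2) 1 := by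
    intro t; simp [norm_sphPt]
  obtain ⟨x, hx, hmax⟩ := (isCompact_closedBall (0 : E2) 1).exists_isMaxOn
    ⟨0, by simp⟩ hf.continuous.continuousOn
  have hx1 : ‖x‖ = 1 := by
    by_contra hne
    have : x ∈ Metric.ball (0 : E2) 1 := by
      simp at hx ⊢; exact lt_of_le_of_ne hx hne
    have hloc : IsLocalMax f x := hmax.isLocalMax
      (mem_of_superset (Metric.isOpen_ball.mem_nhds this) Metric.ball_subset_closedBall)
    exact hcrit x hx hloc.fderiv_eq_zero
  obtain ⟨u, rfl⟩ := exists_sphPt hx1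
  have hmax' : IsMaxOn f (Metric.closedBall (0 : E2) 1) (sphPt t) := fun y hy =>
    (hmax hy).trans (ht u)
  have := hmax'.localize.hasFDerivWithinAt_nonpos (hf (sphPt t)).hasFDerivAt.hasFDerivWithinAt
    (sub_mem_posTangentConeAt_of_segment_subset (y := 0)
      ((convex_closedBall (0 : E2) 1).segment_subset (hmem t) (by simp)))
  simpa using this

lemma hasDerivAt_sphPt (t : ℝ) : HasDerivAt sphPt (sphPt (t + Real.pi / 2)) t := by
  rw [sphPt_eq (t + Real.pi / 2), Real.cos_add_pi_div_two, Real.sin_add_pi_div_two]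
  have h2 : HasDerivAt (fun t => Real.cos t • sphPt 0 + Real.sin t • sphPt (Real.pi / 2))
      (-Real.sin t • sphPt 0 + Real.cos t • sphPt (Real.pi / 2)) t :=
    ((Real.hasDerivAt_cos t).smul_const (sphPt 0)).add
      ((Real.hasDerivAt_sin t).smul_const (sphPt (Real.pi / 2)))
  exact h2.congr_of_eventuallyEq (Eventually.of_forall sphPt_eq)

lemma clm_ext_sph {D : E2 →L[ℝ] ℝ} (h0 : D (sphPt 0) = 0) (h1 : D (sphPt (Real.pi / 2)) = 0) :
    D = 0 := by
  ext x
  have : x = x 0 • sphPt 0 + x 1 • sphPt (Real.pi / 2) := by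
    ext i
    fin_cases i <;> simp [sphPt]
  rw [this]
  simp [h0, h1]

lemma exists_angle {f : E2 → ℝ} (hf : ContDiff ℝ 1 f)
    (hcrit : ∀ x ∈ Metric.closedBall (0 : E2) 1, fderiv ℝ f x ≠ 0) :
    ∃ α ρ : ℝ → ℝ, Continuous α ∧ (∀ t, 0 < ρ t) ∧
      (∀ t, α (t + 2 * Real.pi) = α t - 2 * Real.pi) ∧
      (∀ t, fderiv ℝ f (sphPt t) (sphPt t) = ρ t * Real.cos (α t)) ∧
      (∀ t, fderiv ℝ f (sphPt t) (sphPt (t + Real.pi / 2)) = ρ t * Real.sin (α t)) := by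
  have hD : Continuous (fderiv ℝ f) := hf.continuous_fderiv (by norm_num)
  let r : E2 → E2 := fun x => (max 1 ‖x‖)⁻¹ • x
  have hpos : ∀ x : E2, 0 < max 1 ‖x‖ := fun x => lt_of_lt_of_le one_pos (le_max_left _ _)
  have hr : Continuous r := by
    have h1 : Continuous fun x : E2 => (max 1 ‖x‖)⁻¹ :=
      Continuous.inv₀ (by fun_prop) fun x => (hpos x).ne'
    exact h1.smul continuous_id
  have hrm : ∀ x, r x ∈ Metric.closedBall (0 : E2) 1 := by
    intro x
    simp only [r, mem_closedBall_zero_iff, norm_smul, norm_inv, Real.norm_eq_abs,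
      abs_of_pos (hpos x)]
    rw [inv_mul_le_one₀ (hpos x)]
    exact le_max_right _ _
  have hrs : ∀ t, r (sphPt t) = sphPt t := by
    intro t; simp [r, norm_sphPt]
  let G : E2 → ℂ := fun x => (fderiv ℝ f (r x) (sphPt 0) : ℂ)
    + (fderiv ℝ f (r x) (sphPt (Real.pi / 2)) : ℂ) * Complex.I
  have hG : Continuous G := by
    have : Continuous fun x => fderiv ℝ f (r x) := hD.comp hr
    fun_prop
  have hG0 : (0 : ℂ) ∉ G '' univ := by
    rintro ⟨x, -, hx⟩
    apply hcrit _ (hrm x)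
    have h1 := congrArg Complex.re hx
    have h2 := congrArg Complex.im hx
    simp [G] at h1 h2
    exact clm_ext_sph h1 h2
  have hsc : IsSimplyConnected (univ : Set E2) := by
    have : SimplyConnectedSpace E2 := inferInstance
    exact (Homeomorph.Set.univ E2).toHomotopyEquiv.simplyConnectedSpace
  obtain ⟨L, hL, hLe⟩ := Complex.exists_continuousOn_eqOn_exp_comp hsc isOpen_univ hG.continuousOn hG0
  rw [continuousOn_univ] at hL
  have hsph : Continuous sphPt := continuous_iff_continuousAt.2
    fun t => (hasDerivAt_sphPt t).continuousAt
  have hper : ∀ t, sphPt (t + 2 * Real.pi) = sphPt t := by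
    intro t; simp [sphPt]
  have e : ∀ t, Complex.exp (L (sphPt t)) = G (sphPt t) := fun t => hLe (mem_univ _)
  have e0 : ∀ t, fderiv ℝ f (sphPt t) (sphPt 0)
      = Real.exp (L (sphPt t)).re * Real.cos (L (sphPt t)).im := by
    intro t
    have := congrArg Complex.re (e t)
    rw [Complex.exp_re] at this
    simpa [G, hrs] using this.symm
  have e1 : ∀ t, fderiv ℝ f (sphPt t) (sphPt (Real.pi / 2))
      = Real.exp (L (sphPt t)).re * Real.sin (L (sphPt t)).im := by
    intro t
    have := congrArg Complex.im (e t)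
    rw [Complex.exp_im] at this
    simpa [G, hrs] using this.symm
  refine ⟨fun t => (L (sphPt t)).im - t, fun t => Real.exp (L (sphPt t)).re, by fun_prop,
    fun t => Real.exp_pos _, ?_, ?_, ?_⟩
  · intro t
    simp only [hper]; ring
  · intro t
    have := congrArg (fderiv ℝ f (sphPt t)) (sphPt_eq t)
    rw [this, map_add, map_smul, map_smul, e0, e1, Real.cos_sub]
    simp only [smul_eq_mul]; ring
  · intro t
    have := congrArg (fderiv ℝ f (sphPt t)) (sphPt_eq (t + Real.pi / 2))
    rw [this, map_add, map_smul, map_smul, e0, e1, Real.sin_sub, Real.cos_add_pi_div_two,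
      Real.sin_add_pi_div_two]
    simp only [smul_eq_mul]; ring

/-- Let `h : S¹ → ℝ³` be a C^∞ map (encoded by the 2π-periodic smooth curve
`c = h ∘ (cos, sin)`), `ξ` a unit vector in ℝ³ and `π(x) = ⟪x, ξ⟫`. Suppose `π ∘ h` has
exactly `n` local extremum points on the circle (`n` finite and positive), of which exactly
`s` are absolute extrema, with `s > n/2 + 1` (i.e. `n + 2 < 2s`). Then every C^∞ map
`H : ℝ² → ℝ³` with `H = h` on `S¹` whose derivative is injective at every point of the closed
unit disk has a point `x` of the closed unit disk where the derivative of `π ∘ H` vanishes,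
i.e. the normal direction of the immersed disk at `x` is parallel to `ξ`. -/
theorem stmt_17 (c : ℝ → E3) (hc : ContDiff ℝ (⊤ : ℕ∞) c)
    (hper : Function.Periodic c (2 * Real.pi))
    (ξ : E3) (hξ : ‖ξ‖ = 1) (n s : ℕ) (hn : 0 < n)
    (hT : {t ∈ Set.Ico (0 : ℝ) (2 * Real.pi) |
      IsLocalMax (fun u : ℝ => ⟪c u, ξ⟫) t ∨
        IsLocalMin (fun u : ℝ => ⟪c u, ξ⟫) t}.encard = (n : ℕ∞))
    (hS : {t ∈ Set.Ico (0 : ℝ) (2 * Real.pi) |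
      (∀ u : ℝ, ⟪c u, ξ⟫ ≤ ⟪c t, ξ⟫) ∨
        (∀ u : ℝ, (⟪c t, ξ⟫ : ℝ) ≤ ⟪c u, ξ⟫)}.encard = (s : ℕ∞))
    (hs : n + 2 < 2 * s)
    (H : E2 → E3) (hH : ContDiff ℝ (⊤ : ℕ∞) H) (hHb : ∀ t : ℝ, H (sphPt t) = c t)
    (himm : ∀ x ∈ Metric.closedBall (0 : E2) 1, Function.Injective (fderiv ℝ H x)) :
    ∃ x ∈ Metric.closedBall (0 : E2) 1, fderiv ℝ (fun y : E2 => ⟪H y, ξ⟫) x = 0 := by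
  by_contra hcon
  push Not at hcon
  set f : E2 → ℝ := fun y => ⟪H y, ξ⟫ with hfdef
  set g : ℝ → ℝ := fun u => ⟪c u, ξ⟫ with hgdef
  have hfc : ContDiff ℝ (⊤ : ℕ∞) f := hH.inner ℝ contDiff_const
  have hf1 : ContDiff ℝ 1 f := hfc.of_le (by exact_mod_cast le_top)
  have hfd : Differentiable ℝ f := hf1.differentiable (by norm_num)
  have hfg : ∀ t, f (sphPt t) = g t := fun t => by simp [hfdef, hgdef, hHb]
  obtain ⟨α, ρ, hα, hρ, hαp, hcos, hsin⟩ := exists_angle hf1 hcon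
  have hg : ∀ t, HasDerivAt g (ρ t * Real.sin (α t)) t := by
    intro t
    rw [← hsin]
    have h1 := (hfd (sphPt t)).hasFDerivAt.comp_hasDerivAt t (hasDerivAt_sphPt t)
    have h2 : f ∘ sphPt = g := funext hfg
    rwa [h2] at h1
  have hgper : Function.Periodic g (2 * Real.pi) := fun t => by simp [hgdef, hper t]
  have hTf : {t ∈ Set.Ico (0 : ℝ) (2 * Real.pi) | IsLocalMax g t ∨ IsLocalMin g t}.Finite :=
    Set.finite_of_encard_eq_coe hT
  have hSf : {t ∈ Set.Ico (0 : ℝ) (2 * Real.pi) |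
      (∀ u : ℝ, g u ≤ g t) ∨ (∀ u : ℝ, g t ≤ g u)}.Finite :=
    Set.finite_of_encard_eq_coe hS
  have hTc : hTf.toFinset.card = n := by
    have := hTf.encard_eq_coe_toFinset_card
    rw [hT] at this; exact_mod_cast this.symm
  have hSc : hSf.toFinset.card = s := by
    have := hSf.encard_eq_coe_toFinset_card
    rw [hS] at this; exact_mod_cast this.symm
  set T := hTf.toFinset with hTdef
  set S := hSf.toFinset with hSdef
  have hTm : ∀ t, t ∈ T ↔ t ∈ Set.Ico 0 (2 * Real.pi) ∧ IsLocalExtr g t := by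
    intro t
    simp only [hTdef, Set.Finite.mem_toFinset, Set.mem_ofPred_eq, IsLocalExtr, IsExtrFilter]
    exact and_congr_right fun _ => or_comm
  have hST : S ⊆ T := by
    intro t ht
    simp only [hSdef, Set.Finite.mem_toFinset, Set.mem_ofPred_eq] at ht
    rw [hTm]
    refine ⟨ht.1, ?_⟩
    rcases ht.2 with h | h
    · exact Or.inr (Filter.Eventually.of_forall h)
    · exact Or.inl (Filter.Eventually.of_forall h)
  have hne : T.Nonempty := Finset.card_pos.1 (by omega)
  have hsum := total_sum hα hρ hg hgper hαp T hne hTm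
  have hw1 : ∀ t, wgt g α t ≤ 1 := by
    intro t
    unfold wgt
    split_ifs
    · linarith [Real.neg_one_le_cos (α t)]
    · exact Real.cos_le_one _
  have hwS : ∀ t ∈ S, wgt g α t = -1 := by
    intro t ht
    have hE := ((hTm t).1 (hST ht)).2
    have hs0 := extr_sin hρ hg hE
    simp only [hSdef, Set.Finite.mem_toFinset, Set.mem_ofPred_eq] at ht
    have hsq := Real.sin_sq_add_cos_sq (α t)
    rw [hs0] at hsq
    have hρt := hρ t
    rcases ht.2 with h | h
    · have hm : IsLocalMax g t := Filter.Eventually.of_forall h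
      rw [wgt_of_max hm]
      have h1 := radial_nonneg hfd hcon (t := t) (fun u => by rw [hfg, hfg]; exact h u)
      rw [hcos] at h1
      have h2 : 0 ≤ Real.cos (α t) := nonneg_of_mul_nonneg_right h1 hρt
      nlinarith
    · have hnm : ¬ IsLocalMax g t := by
        intro hm
        -- g would be constant near t, giving infinitely many extrema
        have h1 : ∀ᶠ y in nhds t, ∀ᶠ x in nhds y, g x ≤ g t := eventually_eventually_nhds.2 hm
        have h2 : ∀ᶠ y in nhdsWithin t (Set.Ioi t), ∀ᶠ x in nhds y, g x ≤ g t :=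
          h1.filter_mono nhdsWithin_le_nhds
        have h3 : ∀ᶠ y in nhdsWithin t (Set.Ioi t), y ∈ Set.Ioo t (2 * Real.pi) :=
          Ioo_mem_nhdsGT ht.1.2
        have h4 : ∀ᶠ y in nhds t, y ∉ T.erase t := by
          have : IsClosed ((T.erase t : Finset ℝ) : Set ℝ) := (T.erase t).finite_toSet.isClosed
          exact this.isOpen_compl.mem_nhds (by simp)
        have h5 : ∀ᶠ y in nhdsWithin t (Set.Ioi t), y ∉ T.erase t :=
          h4.filter_mono nhdsWithin_le_nhds
        obtain ⟨y, ⟨hy2, hy3⟩, hy5⟩ := ((h2.and h3).and h5).exists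
        apply hy5
        rw [Finset.mem_erase, hTm]
        refine ⟨hy3.1.ne', ⟨ht.1.1.trans hy3.1.le, hy3.2⟩, Or.inr ?_⟩
        filter_upwards [hy2] with x hx
        exact hx.trans (h y)
      rw [wgt_of_not hnm]
      have h1 := radial_nonneg (f := fun y => -f y) hfd.neg
        (fun x hx => by rw [fderiv_fun_neg]; exact neg_ne_zero.2 (hcon x hx)) (t := t)
        (fun u => by simp only [hfg]; exact neg_le_neg (h u))
      rw [fderiv_fun_neg, neg_apply, hcos] at h1
      have h2 : Real.cos (α t) ≤ 0 := by
        by_contra hc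
        push Not at hc
        nlinarith
      nlinarith
  have hb : ∑ t ∈ T, wgt g α t ≤ (n : ℝ) - 2 * s := by
    rw [← Finset.sum_sdiff hST, Finset.sum_congr rfl hwS]
    have h1 : ∑ t ∈ T \ S, wgt g α t ≤ ∑ t ∈ T \ S, (1 : ℝ) :=
      Finset.sum_le_sum fun t _ => hw1 t
    have h2 : (T \ S).card + S.card = T.card := Finset.card_sdiff_add_card_eq_card hST
    have h3 : ((T \ S).card : ℝ) + s = n := by rw [← hTc, ← hSc]; exact_mod_cast h2
    simp only [Finset.sum_const, nsmul_eq_mul, mul_one, hSc] at h1 ⊢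
    linarith
  have : (n : ℝ) + 2 < 2 * s := by exact_mod_cast hs
  linarith
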